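/- arXiv:1811.04501 — 3 statements merged into one kernel-verified Lean document; each statement's English description precedes it below -/
import Mathlib

section
/- Let f : ℝ → ℂ be 2π-periodic and continuously differentiable. Suppose there is a finite set F ⊂ [0,2π] such that f is twice differentiable on ℝ ∖ (F + 2πℤ) and the second derivative f'' agrees, off F + 2πℤ, with a 2π-periodic function that has bounded variation on [0,2π]. Then for every real s < 5/2 one has ∑_{k∈ℤ} (1+k²)^s |f̂_k|² < ∞. -/
open scoped ENNReal Real

open MeasureTheory Set in
/-- A function of bounded variation that coincides with a derivative off a countable set is
integrable: the derivative provides measurability. -/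
theorem BoundedVariationOn.intervalIntegrable_of_hasDerivAt_off_countable {g h : ℝ → ℂ} {a b : ℝ}
    {S : Set ℝ} (hab : a ≤ b) (hbv : BoundedVariationOn h (Icc a b)) (hS : S.Countable)
    (hg : ∀ θ ∉ S, HasDerivAt g (h θ) θ) : IntervalIntegrable h volume a b := by
  rw [intervalIntegrable_iff_integrableOn_Icc_of_le hab]
  refine Measure.integrableOn_of_bounded (M := ‖h a‖ + (eVariationOn h (Icc a b)).toReal)
    (by simp) ?_ ?_
  · refine (aestronglyMeasurable_deriv g volume).congr ?_
    filter_upwards [hS.ae_notMem volume] with θ hθ using (hg θ hθ).deriv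
  · filter_upwards [ae_restrict_mem measurableSet_Icc] with θ hθ
    have := hbv.dist_le hθ (left_mem_Icc.2 hab)
    rw [dist_eq_norm] at this
    linarith [norm_sub_norm_le (h θ) (h a)]

/-- Integration by parts against the character of frequency `k`, for a function with equal values
at `0` and `2π` which is differentiable off a countable set. -/
theorem integral_exp_mul_deriv_eq {g g' : ℝ → ℂ} {S : Set ℝ} (hS : S.Countable)
    (hc : Continuous g) (hper : g (2 * π) = g 0) (hd : ∀ θ ∉ S, HasDerivAt g (g' θ) θ)
    (hi : IntervalIntegrable g' MeasureTheory.volume 0 (2 * π)) (k : ℤ) :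
    ∫ θ in (0 : ℝ)..(2 * π), Complex.exp (-Complex.I * k * θ) * g' θ =
      Complex.I * k * ∫ θ in (0 : ℝ)..(2 * π), Complex.exp (-Complex.I * k * θ) * g θ := by
  have hec : Continuous fun θ : ℝ ↦ Complex.exp (-Complex.I * k * θ) := by fun_prop
  have hi₁ : IntervalIntegrable
      (fun θ : ℝ ↦ -Complex.I * k * (Complex.exp (-Complex.I * k * θ) * g θ))
      MeasureTheory.volume 0 (2 * π) := by
    apply Continuous.intervalIntegrable
    fun_prop
  have hi₂ : IntervalIntegrable (fun θ : ℝ ↦ Complex.exp (-Complex.I * k * θ) * g' θ)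
      MeasureTheory.volume 0 (2 * π) := hi.continuousOn_mul hec.continuousOn
  have key := MeasureTheory.integral_eq_of_hasDerivAt_off_countable
    (fun θ : ℝ ↦ Complex.exp (-Complex.I * k * θ) * g θ)
    (fun θ : ℝ ↦ -Complex.I * k * (Complex.exp (-Complex.I * k * θ) * g θ) +
      Complex.exp (-Complex.I * k * θ) * g' θ) (a := 0) (b := 2 * π) hS
    (hec.mul hc).continuousOn
    (fun θ hθ ↦ by
      have he : HasDerivAt (fun θ : ℝ ↦ Complex.exp (-Complex.I * k * θ))
          (Complex.exp (-Complex.I * k * θ) * (-Complex.I * k)) θ := by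
        simpa using ((Complex.ofRealCLM.hasDerivAt (x := θ)).const_mul (-Complex.I * k)).cexp
      exact (he.mul (hd θ hθ.2)).congr_deriv (by ring))
    (hi₁.add hi₂)
  rw [intervalIntegral.integral_add hi₁ hi₂, intervalIntegral.integral_const_mul] at key
  have hexp : Complex.exp (-Complex.I * k * ((2 * π : ℝ) : ℂ)) = 1 := by
    rw [← Complex.exp_int_mul_two_pi_mul_I (-k)]
    push_cast
    ring_nf
  simp only [hexp, hper, Complex.ofReal_zero, mul_zero, Complex.exp_zero, sub_self] at key
  linear_combination key

/-- The Fourier coefficients of a function of bounded variation decay like `1 / |k|`. -/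
theorem BoundedVariationOn.norm_integral_exp_mul_le {h : ℝ → ℂ}
    (hbv : BoundedVariationOn h (Set.Icc 0 (2 * π)))
    (hi : IntervalIntegrable h MeasureTheory.volume 0 (2 * π)) {k : ℤ} (hk : k ≠ 0) :
    ‖∫ θ in (0 : ℝ)..(2 * π), Complex.exp (-Complex.I * k * θ) * h θ‖ ≤
      2 * π * (eVariationOn h (Set.Icc 0 (2 * π))).toReal / |(k : ℝ)| := by
  have hkR : 0 < |(k : ℝ)| := by positivity
  set n : ℕ := k.natAbs with hn
  have hnk : (n : ℝ) = |(k : ℝ)| := by rw [hn, Nat.cast_natAbs, Int.cast_abs]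
  set t : ℕ → ℝ := fun j ↦ j * (2 * π / |(k : ℝ)|) with ht
  have ht_step (j : ℕ) : t (j + 1) = t j + 2 * π / |(k : ℝ)| := by
    simp only [ht]; push_cast; ring
  have ht_mono : Monotone t := monotone_nat_of_le_succ fun j ↦ by
    rw [ht_step]; linarith [show 0 ≤ 2 * π / |(k : ℝ)| by positivity]
  have ht_zero : t 0 = 0 := by simp [ht]
  have ht_last : t n = 2 * π := by simp only [ht, hnk]; field_simp
  have hsub {j : ℕ} (hj : j < n) : Set.Icc (t j) (t (j + 1)) ⊆ Set.Icc 0 (2 * π) := by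
    rw [← ht_zero, ← ht_last]
    exact Set.Icc_subset_Icc (ht_mono j.zero_le) (ht_mono hj)
  have hec : Continuous fun θ : ℝ ↦ Complex.exp (-Complex.I * k * θ) := by fun_prop
  have hei : IntervalIntegrable (fun θ : ℝ ↦ Complex.exp (-Complex.I * k * θ) * h θ)
      MeasureTheory.volume 0 (2 * π) := hi.continuousOn_mul hec.continuousOn
  have hei_piece {j : ℕ} (hj : j < n) :
      IntervalIntegrable (fun θ : ℝ ↦ Complex.exp (-Complex.I * k * θ) * h θ)
        MeasureTheory.volume (t j) (t (j + 1)) := by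
    refine hei.mono_set ?_
    rw [Set.uIcc_of_le (ht_mono j.le_succ), Set.uIcc_of_le Real.two_pi_pos.le]
    exact hsub hj
  have hc : -Complex.I * (k : ℂ) ≠ 0 := by simp [hk]
  have hzero (j : ℕ) : ∫ θ in (t j)..(t (j + 1)), Complex.exp (-Complex.I * k * θ) = 0 := by
    rw [integral_exp_mul_complex hc, ht_step, div_eq_zero_iff, sub_eq_zero]
    left
    rw [Complex.exp_eq_exp_iff_exists_int]
    rcases abs_choice (k : ℝ) with habs | habs
    · refine ⟨-1, ?_⟩
      rw [habs]
      push_cast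
      field_simp
      ring
    · refine ⟨1, ?_⟩
      rw [habs]
      push_cast
      field_simp
      ring
  have hpiece (j : ℕ) (hj : j < n) :
      ‖∫ θ in (t j)..(t (j + 1)), Complex.exp (-Complex.I * k * θ) * h θ‖ ≤
        (eVariationOn h (Set.Icc (t j) (t (j + 1)))).toReal * (2 * π / |(k : ℝ)|) := by
    have hle := ht_mono j.le_succ
    have hsplit : ∫ θ in (t j)..(t (j + 1)), Complex.exp (-Complex.I * k * θ) * h θ =
        ∫ θ in (t j)..(t (j + 1)), Complex.exp (-Complex.I * k * θ) * (h θ - h (t j)) := by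
      simp only [mul_sub]
      rw [intervalIntegral.integral_sub (hei_piece hj)
        ((hec.intervalIntegrable _ _).mul_const _), intervalIntegral.integral_mul_const,
        hzero, zero_mul, sub_zero]
    rw [hsplit]
    refine (intervalIntegral.norm_integral_le_of_norm_le_const
      (C := (eVariationOn h (Set.Icc (t j) (t (j + 1)))).toReal) fun θ hθ ↦ ?_).trans_eq ?_
    · rw [Set.uIoc_of_le hle] at hθ
      have hone : ‖Complex.exp (-Complex.I * k * θ)‖ = 1 := by
        rw [Complex.norm_exp]; simp
      rw [norm_mul, hone, one_mul, ← dist_eq_norm]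
      exact (hbv.mono (hsub hj)).dist_le (Set.Ioc_subset_Icc_self hθ) (Set.left_mem_Icc.2 hle)
    · rw [ht_step, add_sub_cancel_left, abs_of_pos (div_pos Real.two_pi_pos hkR)]
  have hvar : ∑ j ∈ Finset.range n, (eVariationOn h (Set.Icc (t j) (t (j + 1)))).toReal =
      (eVariationOn h (Set.Icc 0 (2 * π))).toReal := by
    rw [← ENNReal.toReal_sum fun j hj ↦ hbv.mono (hsub (Finset.mem_range.1 hj)),
      eVariationOn.sum' h ht_mono, ht_zero, ht_last]
  have hsum := intervalIntegral.sum_integral_adjacent_intervals (a := t) (n := n)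
    fun j hj ↦ hei_piece hj
  rw [ht_zero, ht_last] at hsum
  rw [← hsum]
  refine (norm_sum_le_of_le _ fun j hj ↦ hpiece j (Finset.mem_range.1 hj)).trans_eq ?_
  rw [← Finset.sum_mul, hvar]
  ring

/-- If `|c k| ≤ C / |k| ^ 3` for `k ≠ 0`, then `c` has finite Sobolev norm of every order
`s < 5 / 2`. -/
theorem summable_sobolev_weight_of_norm_le_div_cube {c : ℤ → ℂ} {C s : ℝ} (hs : s < 5 / 2)
    (hc : ∀ k : ℤ, k ≠ 0 → ‖c k‖ ≤ C / |(k : ℝ)| ^ 3) :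
    Summable fun k : ℤ ↦ (1 + (k : ℝ) ^ 2) ^ s * ‖c k‖ ^ 2 := by
  set r := max s 0
  have hr₀ : 0 ≤ r := le_max_right _ _
  have hr₁ : 1 < 6 - 2 * r := by
    have : r < 5 / 2 := max_lt hs (by norm_num)
    linarith
  refine Summable.of_norm_bounded_eventually
    ((Real.summable_abs_int_rpow hr₁).mul_left (2 ^ r * C ^ 2)) ?_
  filter_upwards [(Set.finite_singleton (0 : ℤ)).compl_mem_cofinite] with k hk
  have hk : k ≠ 0 := hk
  have hkpos : 0 < |(k : ℝ)| := by positivity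
  have hone : 1 ≤ |(k : ℝ)| := by exact_mod_cast Int.one_le_abs hk
  have hsq : (1 : ℝ) ≤ |(k : ℝ)| ^ 2 := one_le_pow₀ hone
  rw [Real.norm_of_nonneg (by positivity), ← sq_abs (k : ℝ)]
  have hw : (1 + |(k : ℝ)| ^ 2) ^ s ≤ 2 ^ r * |(k : ℝ)| ^ (2 * r) := by
    calc (1 + |(k : ℝ)| ^ 2) ^ s ≤ (1 + |(k : ℝ)| ^ 2) ^ r :=
          Real.rpow_le_rpow_of_exponent_le (by linarith) (le_max_left _ _)
      _ ≤ (2 * |(k : ℝ)| ^ 2) ^ r :=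
          Real.rpow_le_rpow (by positivity) (by linarith) hr₀
      _ = 2 ^ r * |(k : ℝ)| ^ (2 * r) := by
          rw [Real.mul_rpow (by norm_num) (by positivity), Real.rpow_mul hkpos.le]
          norm_num
  have hsplit : |(k : ℝ)| ^ (-(6 - 2 * r)) = |(k : ℝ)| ^ (2 * r) / |(k : ℝ)| ^ 6 := by
    rw [neg_sub, Real.rpow_sub hkpos]
    norm_cast
  calc (1 + |(k : ℝ)| ^ 2) ^ s * ‖c k‖ ^ 2
      ≤ 2 ^ r * |(k : ℝ)| ^ (2 * r) * (C / |(k : ℝ)| ^ 3) ^ 2 := by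
        gcongr
        exact hc k hk
    _ = 2 ^ r * C ^ 2 * |(k : ℝ)| ^ (-(6 - 2 * r)) := by
        rw [hsplit]; field_simp

/-- A `2π`-periodic `C¹` function `f : ℝ → ℂ`, twice differentiable off a `2π`-periodized
finite set `F + 2πℤ` with second derivative agreeing off that set with a `2π`-periodic
function `h` of bounded variation on `[0,2π]`, belongs to `H^s` for every `s < 5/2`:
`∑_{k∈ℤ} (1+k²)^s |f̂_k|² < ∞`. -/
theorem stmt_1 (f : ℝ → ℂ)
    (hper : ∀ θ : ℝ, f (θ + 2 * π) = f θ)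
    (hC1 : ContDiff ℝ 1 f)
    (F : Finset ℝ) (hF : (F : Set ℝ) ⊆ Set.Icc 0 (2 * π))
    (h : ℝ → ℂ)
    (hhper : ∀ θ : ℝ, h (θ + 2 * π) = h θ)
    (hhbv : BoundedVariationOn h (Set.Icc 0 (2 * π)))
    (hf'' : ∀ θ : ℝ, (∀ x ∈ F, ∀ n : ℤ, θ ≠ x + 2 * π * n) →
      HasDerivAt (deriv f) (h θ) θ) :
    ∀ s : ℝ, s < 5 / 2 →
      (∑' k : ℤ, ENNReal.ofReal ((1 + (k : ℝ) ^ 2) ^ s *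
        ‖((1 / (2 * π) : ℝ) *
          ∫ θ in (0 : ℝ)..(2 * π), Complex.exp (-Complex.I * k * θ) * f θ : ℂ)‖ ^ 2)) < ⊤ := by
  intro s hs
  set S : Set ℝ := ⋃ x ∈ F, Set.range fun n : ℤ ↦ x + 2 * π * n
  have hS : S.Countable := F.countable_toSet.biUnion fun x _ ↦ Set.countable_range _
  have hd₂ : ∀ θ ∉ S, HasDerivAt (deriv f) (h θ) θ := fun θ hθ ↦ hf'' θ fun x hx n hn ↦
    hθ (Set.mem_biUnion hx ⟨n, hn.symm⟩)
  have hi := hhbv.intervalIntegrable_of_hasDerivAt_off_countable Real.two_pi_pos.le hS hd₂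
  have hcont : Continuous (deriv f) := hC1.continuous_deriv le_rfl
  have hd₁ : ∀ θ ∉ (∅ : Set ℝ), HasDerivAt f (deriv f θ) θ := fun θ _ ↦
    (hC1.differentiable one_ne_zero θ).hasDerivAt
  have hper₀ : f (2 * π) = f 0 := by simpa using hper 0
  have hper₁ : deriv f (2 * π) = deriv f 0 := by
    have := deriv_comp_add_const f (2 * π) 0
    rw [funext hper, zero_add] at this
    exact this.symm
  set V := (eVariationOn h (Set.Icc 0 (2 * π))).toReal
  refine (summable_sobolev_weight_of_norm_le_div_cube (C := V) hs fun k hk ↦ ?_).tsum_ofReal_lt_top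
  have hkpos : 0 < |(k : ℝ)| := by positivity
  have hbound := hhbv.norm_integral_exp_mul_le hi hk
  rw [integral_exp_mul_deriv_eq hS hcont hper₁ hd₂ hi,
    integral_exp_mul_deriv_eq Set.countable_empty hC1.continuous hper₀ hd₁
      (hcont.intervalIntegrable _ _), ← mul_assoc, norm_mul, norm_mul, norm_mul,
    Complex.norm_I, one_mul, Complex.norm_intCast, le_div_iff₀ hkpos] at hbound
  rw [norm_mul, Complex.norm_real, Real.norm_of_nonneg (by positivity), one_div_mul_eq_div,
    div_le_div_iff₀ Real.two_pi_pos (by positivity)]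
  linear_combination hbound
end

section
/- Let s > 3/2 be real and let γ̃ : ℝ → ℝ be continuously differentiable with γ̃'(θ) > 0 and γ̃(θ+2π) = γ̃(θ) + 2π for all θ. For t ∈ [0,1] set γ̃_t = t·γ̃ + (1−t)·id, and let η_t denote the inverse function of γ̃_t. Suppose C ≥ 0 is such that for every t ∈ [0,1] the Fourier coefficients of η_t' satisfy ∑_{k∈ℤ} (1+k²)^{s−1} |(η_t')^̂_k|² ≤ C². Then for all integers m, n with m < 0 < n or n < 0 < m, the number λ_{m,n} := (1/2π)∫₀^{2π} e^{−imθ} e^{inγ̃(θ)} dθ satisfies |λ_{m,n}| ≤ C/(|m|+|n|)^{s−1}. -/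
open scoped ENNReal Real

/-- The inverse of a `C¹` function with positive derivative is continuous and differentiable. -/
theorem hasDerivAt_inverse_of_deriv_pos {f g : ℝ → ℝ} (hf : ContDiff ℝ 1 f)
    (hpos : ∀ x, 0 < deriv f x) (hl : Function.LeftInverse g f)
    (hr : Function.RightInverse g f) :
    Continuous g ∧ ∀ y, HasDerivAt g (deriv f (g y))⁻¹ y := by
  have hmono : StrictMono f := strictMono_of_deriv_pos hpos
  have hgmono : Monotone g := fun a b hab => by
    rw [← hmono.le_iff_le, hr a, hr b]
    exact hab
  have hg : Continuous g := hgmono.continuous_of_surjective hl.surjective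
  refine ⟨hg, fun y => ?_⟩
  exact HasDerivAt.of_local_left_inverse hg.continuousAt
    ((hf.differentiable one_ne_zero) (g y)).hasDerivAt (hpos _).ne'
    (Filter.Eventually.of_forall hr)

/-- Change of variables: the Fourier coefficients of the derivative of the inverse `g` of a lift `f`
of a circle diffeomorphism are the integrals of `exp (-i k f)`. -/
theorem integral_exp_mul_deriv_inverse {f g : ℝ → ℝ} (hf : ContDiff ℝ 1 f)
    (hpos : ∀ x, 0 < deriv f x) (hper : ∀ x, f (x + 2 * π) = f x + 2 * π)
    (hl : Function.LeftInverse g f) (hr : Function.RightInverse g f) (k : ℤ) :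
    ∫ φ in (0 : ℝ)..(2 * π), Complex.exp (-Complex.I * k * φ) * (Complex.ofReal (deriv g φ)) =
      ∫ θ in (0 : ℝ)..(2 * π), Complex.exp (-Complex.I * k * f θ) := by
  obtain ⟨hg, hg'⟩ := hasDerivAt_inverse_of_deriv_pos hf hpos hl hr
  have hderiv : deriv g = fun y => (deriv f (g y))⁻¹ := funext fun y => (hg' y).deriv
  have hcont : Continuous (deriv g) := by
    rw [hderiv]
    exact ((hf.continuous_deriv le_rfl).comp hg).inv₀ fun y => (hpos _).ne'
  have hfc : Continuous f := hf.continuous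
  have hsub := intervalIntegral.integral_deriv_smul_comp (a := 0) (b := 2 * π) (f := g)
    (f' := deriv g) (g := fun θ => Complex.exp (-Complex.I * k * f θ))
    (fun y _ => by simpa only [hderiv] using hg' y) hcont.continuousOn (by fun_prop)
  have hend : g (2 * π) = g 0 + 2 * π := by
    rw [← hl (g 0 + 2 * π), hper, hr 0, zero_add]
  have hperiodic : Function.Periodic (fun θ => Complex.exp (-Complex.I * k * f θ)) (2 * π) := by
    intro θ
    dsimp only
    rw [hper, Complex.exp_eq_exp_iff_exists_int]
    exact ⟨-k, by push_cast; ring⟩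
  have hshift := hperiodic.intervalIntegral_add_eq (g 0) 0
  rw [zero_add] at hshift
  rw [← hshift, ← hend, ← hsub]
  refine intervalIntegral.integral_congr fun φ _ => ?_
  simp only [Function.comp_apply, hr φ, Complex.real_smul]
  ring

/-- A single term of a weighted `ℓ²` bound controls the corresponding coefficient. -/
theorem le_div_rpow_of_sq_weight_le {x a r C : ℝ} (hx : 0 < x) (hr : 0 ≤ r)
    (hC : 0 ≤ C) (h : (1 + x ^ 2) ^ r * a ^ 2 ≤ C ^ 2) : a ≤ C / x ^ r := by
  rw [le_div_iff₀ (Real.rpow_pos_of_pos hx r)]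
  refine le_of_sq_le_sq ?_ hC
  have hpow : (x ^ r) ^ 2 = (x ^ 2) ^ r := Real.rpow_pow_comm hx.le r 2
  calc (a * x ^ r) ^ 2 = (x ^ 2) ^ r * a ^ 2 := by rw [mul_pow, hpow, mul_comm]
    _ ≤ (1 + x ^ 2) ^ r * a ^ 2 := by gcongr; linarith
    _ ≤ C ^ 2 := h

/-- Lemma 5.1: for a lift `γ` of a circle diffeomorphism, with interpolations
`γ_t = t γ + (1-t) id` having inverses `η t` whose derivatives have uniformly bounded
`H^{s-1}` norm `≤ C²`, the coefficients `λ_{m,n} = (1/2π)∫₀^{2π} e^{-imθ} e^{inγ(θ)} dθ`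
satisfy `|λ_{m,n}| ≤ C/(|m|+|n|)^{s-1}` whenever `m,n` have opposite signs. -/
theorem stmt_5 (s : ℝ) (hs : 3 / 2 < s) (γ : ℝ → ℝ)
    (hC1 : ContDiff ℝ 1 γ) (hpos : ∀ θ : ℝ, 0 < deriv γ θ)
    (hper : ∀ θ : ℝ, γ (θ + 2 * π) = γ θ + 2 * π)
    (η : ℝ → ℝ → ℝ)
    (hη : ∀ t ∈ Set.Icc (0 : ℝ) 1,
      Function.LeftInverse (η t) (fun θ => t * γ θ + (1 - t) * θ) ∧
      Function.RightInverse (η t) (fun θ => t * γ θ + (1 - t) * θ))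
    (C : ℝ) (hC : 0 ≤ C)
    (hbound : ∀ t ∈ Set.Icc (0 : ℝ) 1,
      (∑' k : ℤ, ENNReal.ofReal ((1 + (k : ℝ) ^ 2) ^ (s - 1) *
        ‖((1 / (2 * π) : ℝ) *
          ∫ φ in (0 : ℝ)..(2 * π), Complex.exp (-Complex.I * k * φ) * (Complex.ofReal (deriv (η t) φ)) : ℂ)‖ ^ 2))
        ≤ ENNReal.ofReal (C ^ 2))
    (m n : ℤ) (hmn : (m < 0 ∧ 0 < n) ∨ (n < 0 ∧ 0 < m)) :
    ‖((1 / (2 * π) : ℝ) *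
        ∫ θ in (0 : ℝ)..(2 * π), Complex.exp (-Complex.I * m * θ) * Complex.exp (Complex.I * n * γ θ) : ℂ)‖
      ≤ C / (|(m : ℝ)| + |(n : ℝ)|) ^ (s - 1) := by
  have hk : |((m - n : ℤ) : ℝ)| = |(m : ℝ)| + |(n : ℝ)| := by
    push_cast
    rcases hmn with ⟨hm, hn⟩ | ⟨hn, hm⟩
    · have hm' : (m : ℝ) < 0 := by exact_mod_cast hm
      have hn' : (0 : ℝ) < n := by exact_mod_cast hn
      rw [abs_of_neg hm', abs_of_pos hn', abs_of_neg (by linarith)]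
      ring
    · have hn' : (n : ℝ) < 0 := by exact_mod_cast hn
      have hm' : (0 : ℝ) < m := by exact_mod_cast hm
      rw [abs_of_pos hm', abs_of_neg hn', abs_of_pos (by linarith)]
      ring
  have hne : (n : ℝ) - m ≠ 0 := by
    rw [sub_ne_zero]
    exact_mod_cast (show n ≠ m by omega)
  have hkpos : 0 < |((m - n : ℤ) : ℝ)| := by
    rw [abs_pos]
    exact_mod_cast (show m - n ≠ 0 by omega)
  obtain ⟨t, htk⟩ : ∃ t : ℝ, t * (n - m) = n := ⟨n / (n - m), div_mul_cancel₀ _ hne⟩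
  have ht : t ∈ Set.Icc (0 : ℝ) 1 := by
    rcases hmn with ⟨hm, hn⟩ | ⟨hn, hm⟩
    · have hm' : (m : ℝ) < 0 := by exact_mod_cast hm
      have hn' : (0 : ℝ) < n := by exact_mod_cast hn
      constructor <;> nlinarith
    · have hn' : (n : ℝ) < 0 := by exact_mod_cast hn
      have hm' : (0 : ℝ) < m := by exact_mod_cast hm
      constructor <;> nlinarith
  set f : ℝ → ℝ := fun θ => t * γ θ + (1 - t) * θ with hf_def
  have hf : ContDiff ℝ 1 f := by fun_prop
  have hfpos : ∀ θ, 0 < deriv f θ := fun θ => by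
    have hd : HasDerivAt f (t * deriv γ θ + (1 - t) * 1) θ :=
      (((hC1.differentiable one_ne_zero) θ).hasDerivAt.const_mul t).add
        ((hasDerivAt_id θ).const_mul (1 - t))
    rw [hd.deriv]
    rcases ht.1.eq_or_lt with h0 | h0
    · rw [← h0]
      norm_num
    · have := mul_pos h0 (hpos θ)
      linarith [ht.2]
  have hfper : ∀ θ, f (θ + 2 * π) = f θ + 2 * π := fun θ => by
    simp only [hf_def, hper]
    ring
  have hphase : ∀ θ : ℝ, Complex.exp (-Complex.I * m * θ) * Complex.exp (Complex.I * n * γ θ) =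
      Complex.exp (-Complex.I * (m - n : ℤ) * f θ) := fun θ => by
    have htk' : (t : ℂ) * (n - m) = n := by exact_mod_cast htk
    rw [← Complex.exp_add]
    congr 1
    simp only [hf_def]
    push_cast
    linear_combination (Complex.I * θ - Complex.I * γ θ) * htk'
  simp only [hphase]
  rw [← integral_exp_mul_deriv_inverse hf hfpos hfper (hη t ht).1 (hη t ht).2 (m - n), ← hk]
  refine le_div_rpow_of_sq_weight_le hkpos (by linarith) hC ?_
  rw [sq_abs]
  exact (ENNReal.ofReal_le_ofReal_iff (sq_nonneg C)).1
    ((ENNReal.le_tsum (m - n)).trans (hbound t ht))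
end

section
/- Let h : ℝ → ℝ be a smooth function with h(t) = 1 for t ≤ 1 and h(t) = 0 for t ≥ 2. Define 2π-periodic functions g, g_n : ℝ → ℝ (n ≥ 1) by g(θ) = 1 + cos θ, and g_n(θ) = (1+cos θ)·h(tan(θ/2)/n) for θ ∈ (−π, π), g_n(π) = 0, extended 2π-periodically. Then for every real s with 2 < s < 5/2, one has ∑_{k∈ℤ} (1+k²)^s |(g_n − g)^̂_k|² → 0 as n → ∞. -/
open scoped ENNReal Real

open Set Filter Topology MeasureTheory

theorem intervalIntegrable_exp_mul_of_bounded {z : ℂ} {a b B : ℝ} (hab : a < b) {F : ℝ → ℝ}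
    (hF : ContinuousOn F (Ioo a b)) (hB : ∀ θ ∈ Ioo a b, |F θ| ≤ B) :
    IntervalIntegrable (fun θ : ℝ => Complex.exp (z * θ) * (F θ : ℂ)) volume a b := by
  rw [intervalIntegrable_iff_integrableOn_Ioo_of_le hab.le]
  have hFi : IntegrableOn (fun θ => (F θ : ℂ)) (Ioo a b) := by
    refine IntegrableOn.of_bound (by simp)
      (ContinuousOn.aestronglyMeasurable (by fun_prop) measurableSet_Ioo) B ?_
    filter_upwards [ae_restrict_mem measurableSet_Ioo] with θ hθ
    simpa using hB θ hθ
  have hc : Continuous fun θ : ℝ => Complex.exp (z * θ) := by fun_prop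
  obtain ⟨C, hC⟩ := isCompact_Icc.exists_bound_of_continuousOn (s := Icc a b) hc.continuousOn
  refine hFi.bdd_mul (c := C) hc.aestronglyMeasurable ?_
  filter_upwards [ae_restrict_mem measurableSet_Ioo] with θ hθ
  exact hC θ (Ioo_subset_Icc_self hθ)

theorem norm_exp_neg_I_mul (k : ℤ) (θ : ℝ) : ‖Complex.exp (-Complex.I * k * θ)‖ = 1 := by
  rw [show (-Complex.I * k * θ : ℂ) = ((-(k * θ) : ℝ) : ℂ) * Complex.I by push_cast; ring]
  exact Complex.norm_exp_ofReal_mul_I _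

theorem norm_integral_exp_mul_le {k : ℤ} {a b B : ℝ} (hab : a < b) {F : ℝ → ℝ}
    (hB : ∀ θ ∈ Ioo a b, |F θ| ≤ B) :
    ‖∫ θ in a..b, Complex.exp (-Complex.I * k * θ) * (F θ : ℂ)‖ ≤ B * (b - a) := by
  have := intervalIntegral.norm_integral_le_of_norm_le_const_ae (a := a) (b := b) (C := B)
    (f := fun θ : ℝ => Complex.exp (-Complex.I * k * θ) * (F θ : ℂ)) (by
      have hb : ∀ᵐ θ : ℝ, θ ≠ b := by simp [ae_iff]
      filter_upwards [hb] with θ hθb hθ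
      rw [uIoc_of_le hab.le] at hθ
      rw [norm_mul, norm_exp_neg_I_mul, one_mul, Complex.norm_real]
      exact hB θ ⟨hθ.1, lt_of_le_of_ne hθ.2 hθb⟩)
  rwa [abs_of_pos (sub_pos.2 hab)] at this

/-- Three integrations by parts, with a jump `L` of the second derivative at the right end. -/
theorem norm_integral_exp_mul_le_of_three_derivs {k : ℤ} {a b B L : ℝ} (hk : k ≠ 0)
    (hab : a < b) {F₀ F₁ F₂ F₃ : ℝ → ℝ}
    (hF₀ : ∀ θ ∈ Ioo a b, HasDerivAt F₀ (F₁ θ) θ) (hF₁ : ∀ θ ∈ Ioo a b, HasDerivAt F₁ (F₂ θ) θ)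
    (hF₂ : ∀ θ ∈ Ioo a b, HasDerivAt F₂ (F₃ θ) θ) (hF₃ : ContinuousOn F₃ (Ioo a b))
    (hB₀ : ∀ θ ∈ Ioo a b, |F₀ θ| ≤ B) (hB₃ : ∀ θ ∈ Ioo a b, |F₃ θ| ≤ B)
    (ha₀ : Tendsto F₀ (𝓝[>] a) (𝓝 0)) (ha₁ : Tendsto F₁ (𝓝[>] a) (𝓝 0))
    (ha₂ : Tendsto F₂ (𝓝[>] a) (𝓝 0)) (hb₀ : Tendsto F₀ (𝓝[<] b) (𝓝 0))
    (hb₁ : Tendsto F₁ (𝓝[<] b) (𝓝 0)) (hb₂ : Tendsto F₂ (𝓝[<] b) (𝓝 L)) :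
    |(k : ℝ)| ^ 3 * ‖∫ θ in a..b, Complex.exp (-Complex.I * k * θ) * (F₀ θ : ℂ)‖
      ≤ |L| + B * (b - a) := by
  set z : ℂ := -Complex.I * k with hz
  have hz0 : z ≠ 0 := by simp [hz, hk]
  have hzn : ‖z‖ = |(k : ℝ)| := by simp [hz]
  have hi₀ := intervalIntegrable_exp_mul_of_bounded (z := z) hab
    (fun θ hθ => (hF₀ θ hθ).continuousAt.continuousWithinAt) hB₀
  have hi₃ := intervalIntegrable_exp_mul_of_bounded (z := z) hab hF₃ hB₃
  have hlim : ∀ {l : Filter ℝ} {x x₂ : ℝ}, l ≤ 𝓝 x → Tendsto F₀ l (𝓝 0) → Tendsto F₁ l (𝓝 0) →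
      Tendsto F₂ l (𝓝 x₂) → Tendsto (fun θ : ℝ => Complex.exp (z * θ) *
        (z ^ 2 * F₀ θ - z * F₁ θ + F₂ θ)) l (𝓝 (Complex.exp (z * x) * x₂)) := by
    intro l x x₂ hl h0 h1 h2
    have he : Tendsto (fun θ : ℝ => Complex.exp (z * θ)) l (𝓝 (Complex.exp (z * x))) :=
      (Continuous.tendsto (by fun_prop) x).mono_left hl
    have c0 := (Complex.continuous_ofReal.tendsto _).comp h0
    have c1 := (Complex.continuous_ofReal.tendsto _).comp h1
    have c2 := (Complex.continuous_ofReal.tendsto _).comp h2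
    simpa using he.mul (((c0.const_mul (z ^ 2)).sub (c1.const_mul z)).add c2)
  have key := intervalIntegral.integral_eq_sub_of_hasDerivAt_of_tendsto hab
    (f := fun θ : ℝ => Complex.exp (z * θ) * (z ^ 2 * F₀ θ - z * F₁ θ + F₂ θ))
    (f' := fun θ : ℝ => z ^ 3 * (Complex.exp (z * θ) * F₀ θ) + Complex.exp (z * θ) * F₃ θ)
    (fun θ hθ => by
      have he : HasDerivAt (fun θ : ℝ => Complex.exp (z * θ)) (Complex.exp (z * θ) * z) θ := by
        simpa using ((Complex.ofRealCLM.hasDerivAt (x := θ)).const_mul z).cexp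
      have := he.mul ((((hF₀ θ hθ).ofReal_comp.const_mul (z ^ 2)).sub
        ((hF₁ θ hθ).ofReal_comp.const_mul z)).add (hF₂ θ hθ).ofReal_comp)
      refine this.congr_deriv ?_
      simp only [Pi.add_apply, Pi.sub_apply]
      ring)
    ((hi₀.const_mul _).add hi₃)
    (hlim nhdsWithin_le_nhds ha₀ ha₁ ha₂) (hlim nhdsWithin_le_nhds hb₀ hb₁ hb₂)
  rw [intervalIntegral.integral_add (hi₀.const_mul _) hi₃,
    intervalIntegral.integral_const_mul] at key
  have h3 := norm_integral_exp_mul_le (k := k) hab hB₃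
  rw [← hz] at h3
  calc |(k : ℝ)| ^ 3 * ‖∫ θ in a..b, Complex.exp (z * θ) * (F₀ θ : ℂ)‖
      = ‖z ^ 3 * ∫ θ in a..b, Complex.exp (z * θ) * (F₀ θ : ℂ)‖ := by
        rw [norm_mul, norm_pow, hzn]
    _ = ‖Complex.exp (z * b) * L - ∫ θ in a..b, Complex.exp (z * θ) * (F₃ θ : ℂ)‖ := by
        congr 1
        rw [eq_sub_iff_add_eq, key]
        simp
    _ ≤ ‖Complex.exp (z * b) * L‖ + ‖∫ θ in a..b, Complex.exp (z * θ) * (F₃ θ : ℂ)‖ :=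
        norm_sub_le _ _
    _ ≤ |L| + B * (b - a) := by
        gcongr
        rw [norm_mul, hz, norm_exp_neg_I_mul]
        simp

/-- Summation of Fourier coefficients that tend to `0` and decay like `|k|⁻³` uniformly. -/
theorem tendsto_tsum_sobolev_of_cubic_decay {a : ℕ → ℤ → ℂ} {K : ℝ} {s : ℝ} (hs : s < 5 / 2)
    (h0 : ∀ k, Tendsto (fun n => a n k) atTop (𝓝 0))
    (hK : ∀ᶠ n in atTop, ∀ k, ‖a n k‖ ≤ K)
    (hK₃ : ∀ᶠ n in atTop, ∀ k : ℤ, |(k : ℝ)| ^ 3 * ‖a n k‖ ≤ K) :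
    Tendsto (fun n => ∑' k : ℤ, ENNReal.ofReal ((1 + (k : ℝ) ^ 2) ^ s * ‖a n k‖ ^ 2))
      atTop (𝓝 0) := by
  have hsum : Summable fun k : ℤ => 8 * K ^ 2 * (1 + (k : ℝ) ^ 2) ^ (s - 3) := by
    refine Summable.mul_left _ ?_
    refine Summable.of_norm_bounded_eventually
      (Real.summable_abs_int_rpow (b := 2 * (3 - s)) (by linarith)) ?_
    filter_upwards [(Set.finite_singleton (0 : ℤ)).compl_mem_cofinite] with k hk
    have hk' : 0 < |(k : ℝ)| := by
      have : k ≠ 0 := by simpa using hk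
      positivity
    rw [Real.norm_of_nonneg (by positivity), show -(2 * (3 - s)) = (2 : ℝ) * (s - 3) by ring,
      Real.rpow_mul hk'.le]
    refine Real.rpow_le_rpow_of_nonpos (by positivity) ?_ (by linarith)
    norm_num
  have hbound : ∀ᶠ n in atTop, ∀ k : ℤ, ‖(1 + (k : ℝ) ^ 2) ^ s * ‖a n k‖ ^ 2‖
      ≤ 8 * K ^ 2 * (1 + (k : ℝ) ^ 2) ^ (s - 3) := by
    filter_upwards [hK, hK₃] with n hn hn₃ k
    have hp : 0 < 1 + (k : ℝ) ^ 2 := by positivity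
    rw [Real.norm_of_nonneg (by positivity)]
    have h1 : ‖a n k‖ ^ 2 ≤ K ^ 2 := by gcongr; exact hn k
    have h2 : ((k : ℝ) ^ 2) ^ 3 * ‖a n k‖ ^ 2 ≤ K ^ 2 := by
      have : (|(k : ℝ)| ^ 3 * ‖a n k‖) ^ 2 ≤ K ^ 2 := by gcongr; exact hn₃ k
      rw [mul_pow, ← pow_mul, mul_comm 3 2, pow_mul, sq_abs] at this
      exact this
    have h3 : (1 + (k : ℝ) ^ 2) ^ 3 ≤ 4 * (1 + ((k : ℝ) ^ 2) ^ 3) := by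
      have : 0 ≤ (k : ℝ) ^ 2 := by positivity
      nlinarith [mul_nonneg (add_nonneg zero_le_one this) (sq_nonneg ((k : ℝ) ^ 2 - 1))]
    have h4 : (1 + (k : ℝ) ^ 2) ^ 3 * ‖a n k‖ ^ 2 ≤ 8 * K ^ 2 := by
      have := mul_le_mul_of_nonneg_right h3 (sq_nonneg ‖a n k‖)
      linarith
    have h5 : (1 + (k : ℝ) ^ 2) ^ s = (1 + (k : ℝ) ^ 2) ^ 3 * (1 + (k : ℝ) ^ 2) ^ (s - 3) := by
      rw [← Real.rpow_natCast (1 + (k : ℝ) ^ 2) 3, ← Real.rpow_add hp]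
      congr 1
      push_cast
      ring
    rw [h5]
    have := mul_le_mul_of_nonneg_right h4 (Real.rpow_nonneg hp.le (s - 3))
    linarith
  have hreal := tendsto_tsum_of_dominated_convergence hsum (g := fun _ => (0 : ℝ))
    (fun k => by
      have := (((h0 k).norm.pow 2).const_mul ((1 + (k : ℝ) ^ 2) ^ s))
      simpa using this) hbound
  have := (ENNReal.continuous_ofReal.tendsto _).comp hreal
  simp only [tsum_zero, ENNReal.ofReal_zero] at this
  refine this.congr' ?_
  filter_upwards [hbound] with n hn
  exact ENNReal.ofReal_tsum_of_nonneg (fun k => by positivity)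
    (Summable.of_norm_bounded hsum hn)

theorem hasDerivAt_tan_half {θ : ℝ} (hθ : θ ∈ Ioo (-π) π) :
    HasDerivAt (fun θ => Real.tan (θ / 2)) ((1 + Real.tan (θ / 2) ^ 2) / 2) θ := by
  have hc : Real.cos (θ / 2) ≠ 0 :=
    (Real.cos_pos_of_mem_Ioo ⟨by linarith [hθ.1], by linarith [hθ.2]⟩).ne'
  refine ((Real.hasDerivAt_tan hc).comp θ ((hasDerivAt_id θ).div_const 2)).congr_deriv ?_
  rw [one_div, ← Real.inv_one_add_tan_sq hc, inv_inv]
  ring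

theorem one_add_cos_mul_one_add_tan_half_sq {θ : ℝ} (hθ : θ ∈ Ioo (-π) π) :
    (1 + Real.cos θ) * (1 + Real.tan (θ / 2) ^ 2) = 2 := by
  have hc : Real.cos (θ / 2) ≠ 0 :=
    (Real.cos_pos_of_mem_Ioo ⟨by linarith [hθ.1], by linarith [hθ.2]⟩).ne'
  have h := Real.inv_one_add_tan_sq hc
  have h' : Real.cos θ = 2 * Real.cos (θ / 2) ^ 2 - 1 := by
    rw [← Real.cos_two_mul]
    congr 1
    ring
  have : (1 + Real.tan (θ / 2) ^ 2) ≠ 0 := by positivity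
  rw [h', ← h]
  field_simp
  ring

theorem sin_mul_one_add_tan_half_sq {θ : ℝ} (hθ : θ ∈ Ioo (-π) π) :
    Real.sin θ * (1 + Real.tan (θ / 2) ^ 2) = 2 * Real.tan (θ / 2) := by
  have hc : Real.cos (θ / 2) ≠ 0 :=
    (Real.cos_pos_of_mem_Ioo ⟨by linarith [hθ.1], by linarith [hθ.2]⟩).ne'
  have h : Real.sin θ = 2 * Real.sin (θ / 2) * Real.cos (θ / 2) := by
    rw [← Real.sin_two_mul]
    congr 1
    ring
  rw [h, Real.tan_eq_sin_div_cos]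
  field_simp
  rw [add_comm, Real.sin_sq_add_cos_sq, mul_one]

theorem lt_tan_half_of_two_arctan_lt {x θ : ℝ} (hx : 2 * Real.arctan x < θ) (hθ : θ < π) :
    x < Real.tan (θ / 2) := by
  have := Real.tan_lt_tan_of_lt_of_lt_pi_div_two (Real.neg_pi_div_two_lt_arctan x)
    (y := θ / 2) (by linarith) (by linarith)
  rwa [Real.tan_arctan] at this

theorem tan_half_lt_of_lt_two_arctan {x θ : ℝ} (hθ : -π < θ) (hx : θ < 2 * Real.arctan x) :
    Real.tan (θ / 2) < x := by
  have := Real.tan_lt_tan_of_lt_of_lt_pi_div_two (x := θ / 2) (by linarith)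
    (Real.arctan_lt_pi_div_two x) (by linarith)
  rwa [Real.tan_arctan] at this

theorem pi_sub_two_arctan_le {x : ℝ} (hx : 0 < x) : π - 2 * Real.arctan x ≤ 2 / x := by
  have h := Real.arctan_inv_of_pos hx
  have h' := Real.le_tan (x := Real.arctan x⁻¹) (Real.arctan_nonneg.2 (by positivity))
    (Real.arctan_lt_pi_div_two _)
  rw [Real.tan_arctan, h] at h'
  rw [div_eq_mul_inv]
  linarith

/-- Uniform cubic decay of the Fourier coefficients of `(1 + cos θ) H₀(tan(θ/2)/N)`. -/
theorem cubic_decay_of_cutoff {H₀ H₁ H₂ H₃ : ℝ → ℝ} {M N : ℝ} {k : ℤ} (hk : k ≠ 0) (hN : 1 ≤ N)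
    (hH₀ : ∀ t, HasDerivAt H₀ (H₁ t) t) (hH₁ : ∀ t, HasDerivAt H₁ (H₂ t) t)
    (hH₂ : ∀ t, HasDerivAt H₂ (H₃ t) t) (hH₃ : Continuous H₃)
    (hM₀ : ∀ t, |H₀ t| ≤ M) (hM₁ : ∀ t, |H₁ t| ≤ M) (hM₃ : ∀ t, |H₃ t| ≤ M)
    (hl₀ : ∀ t < 1, H₀ t = 0) (hl₁ : ∀ t < 1, H₁ t = 0) (hl₂ : ∀ t < 1, H₂ t = 0)
    (hr₀ : ∀ t > 2, H₀ t = -1) (hr₁ : ∀ t > 2, H₁ t = 0) (hr₂ : ∀ t > 2, H₂ t = 0)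
    (hr₃ : ∀ t > 2, H₃ t = 0) :
    |(k : ℝ)| ^ 3 * ‖∫ θ in (2 * Real.arctan (N / 2))..π, Complex.exp (-Complex.I * k * θ) *
      (((1 + Real.cos θ) * H₀ (Real.tan (θ / 2) / N) : ℝ) : ℂ)‖ ≤ 1 + 36 * M := by
  have hN0 : 0 < N := by linarith
  have hM : 0 ≤ M := (abs_nonneg _).trans (hM₀ 0)
  set a := 2 * Real.arctan (N / 2) with ha
  have ha0 : 0 < a := by
    have := Real.arctan_pos.2 (half_pos hN0)
    positivity
  have haπ : a < π := by linarith [Real.arctan_lt_pi_div_two (N / 2)]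
  have hsub : ∀ θ ∈ Ioo a π, θ ∈ Ioo (-π) π := fun θ hθ => ⟨by linarith [hθ.1], hθ.2⟩
  have hx : ∀ θ ∈ Ioo (-π) π, HasDerivAt (fun θ => Real.tan (θ / 2) / N)
      ((1 + Real.tan (θ / 2) ^ 2) / 2 / N) θ := fun θ hθ => (hasDerivAt_tan_half hθ).div_const N
  have hd₀ : ∀ θ ∈ Ioo (-π) π, HasDerivAt
      (fun θ => (1 + Real.cos θ) * H₀ (Real.tan (θ / 2) / N))
      (-Real.sin θ * H₀ (Real.tan (θ / 2) / N) + H₁ (Real.tan (θ / 2) / N) / N) θ := by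
    intro θ hθ
    refine (((Real.hasDerivAt_cos θ).const_add 1).mul ((hH₀ _).comp θ (hx θ hθ))).congr_deriv ?_
    simp only [Function.comp]
    linear_combination (H₁ (Real.tan (θ / 2) / N) / (2 * N)) *
      one_add_cos_mul_one_add_tan_half_sq hθ
  have hd₁ : ∀ θ ∈ Ioo (-π) π, HasDerivAt
      (fun θ => -Real.sin θ * H₀ (Real.tan (θ / 2) / N) + H₁ (Real.tan (θ / 2) / N) / N)
      (-Real.cos θ * H₀ (Real.tan (θ / 2) / N) -
        Real.tan (θ / 2) / N * H₁ (Real.tan (θ / 2) / N) +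
        (1 + Real.tan (θ / 2) ^ 2) / (2 * N ^ 2) * H₂ (Real.tan (θ / 2) / N)) θ := by
    intro θ hθ
    refine (((Real.hasDerivAt_sin θ).neg.mul ((hH₀ _).comp θ (hx θ hθ))).add
      (((hH₁ _).comp θ (hx θ hθ)).div_const N)).congr_deriv ?_
    simp only [Function.comp, Pi.neg_apply]
    linear_combination (-H₁ (Real.tan (θ / 2) / N) / (2 * N)) * sin_mul_one_add_tan_half_sq hθ
  have hd₂ : ∀ θ ∈ Ioo (-π) π, HasDerivAt
      (fun θ => -Real.cos θ * H₀ (Real.tan (θ / 2) / N) -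
        Real.tan (θ / 2) / N * H₁ (Real.tan (θ / 2) / N) +
        (1 + Real.tan (θ / 2) ^ 2) / (2 * N ^ 2) * H₂ (Real.tan (θ / 2) / N))
      (Real.sin θ * H₀ (Real.tan (θ / 2) / N) - H₁ (Real.tan (θ / 2) / N) / N +
        (1 + Real.tan (θ / 2) ^ 2) ^ 2 / (4 * N ^ 3) * H₃ (Real.tan (θ / 2) / N)) θ := by
    intro θ hθ
    have h0 := (hH₀ _).comp θ (hx θ hθ)
    have h1 := (hH₁ _).comp θ (hx θ hθ)
    have h2 := (hH₂ _).comp θ (hx θ hθ)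
    refine ((((Real.hasDerivAt_cos θ).neg.mul h0).sub ((hx θ hθ).mul h1)).add
      (((((hasDerivAt_tan_half hθ).pow 2).const_add 1).div_const (2 * N ^ 2)).mul
        h2)).congr_deriv ?_
    simp only [Function.comp, Pi.neg_apply, Pi.pow_apply]
    field_simp
    push_cast
    linear_combination (-8 * N ^ 2 * H₁ (Real.tan (θ / 2) / N)) *
      one_add_cos_mul_one_add_tan_half_sq hθ
  have hmem : a ∈ Ioo (-π) π := ⟨by linarith, haπ⟩
  have hta : Real.tan (a / 2) / N < 1 := by
    rw [ha, mul_div_cancel_left₀ _ two_ne_zero, Real.tan_arctan, div_lt_one hN0]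
    linarith
  have hend : ∀ᶠ θ in 𝓝[<] π, 2 < Real.tan (θ / 2) / N := by
    have : 2 * Real.arctan (2 * N) < π := by linarith [Real.arctan_lt_pi_div_two (2 * N)]
    filter_upwards [Ioo_mem_nhdsLT this] with θ hθ
    rw [lt_div_iff₀ hN0]
    exact lt_tan_half_of_two_arctan_lt hθ.1 hθ.2
  have hlim : ∀ {f G : ℝ → ℝ} {c : ℝ}, Continuous G → G π = c → (∀ᶠ θ in 𝓝[<] π, G θ = f θ) →
      Tendsto f (𝓝[<] π) (𝓝 c) := by
    intro f G c hG hc hfg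
    exact (hc ▸ (hG.tendsto π).mono_left nhdsWithin_le_nhds).congr' hfg
  have hleft : ∀ {f : ℝ → ℝ} {f' : ℝ}, HasDerivAt f f' a → f a = 0 → Tendsto f (𝓝[>] a) (𝓝 0) :=
    fun hf h0 => h0 ▸ hf.continuousAt.tendsto.mono_left nhdsWithin_le_nhds
  have key := norm_integral_exp_mul_le_of_three_derivs (B := 9 * M * N) (L := -1) hk haπ
    (fun θ hθ => hd₀ θ (hsub θ hθ)) (fun θ hθ => hd₁ θ (hsub θ hθ))
    (fun θ hθ => hd₂ θ (hsub θ hθ)) ?_ ?_ ?_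
    (hleft (hd₀ a hmem) (by simp [hl₀ _ hta]))
    (hleft (hd₁ a hmem) (by simp [hl₀ _ hta, hl₁ _ hta]))
    (hleft (hd₂ a hmem) (by simp [hl₀ _ hta, hl₁ _ hta, hl₂ _ hta]))
    (hlim (G := fun θ => -(1 + Real.cos θ)) (by fun_prop) (by simp) (by
      filter_upwards [hend] with θ hθ
      simp [hr₀ _ hθ]))
    (hlim (G := Real.sin) (by fun_prop) (by simp) (by
      filter_upwards [hend] with θ hθ
      simp [hr₀ _ hθ, hr₁ _ hθ]))
    (hlim (G := Real.cos) (by fun_prop) (by simp) (by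
      filter_upwards [hend] with θ hθ
      simp [hr₀ _ hθ, hr₁ _ hθ, hr₂ _ hθ]))
  · refine key.trans ?_
    have hw := pi_sub_two_arctan_le (half_pos hN0)
    have : 9 * M * N * (π - a) ≤ 9 * M * N * (2 / (N / 2)) := by gcongr
    have h' : 9 * M * N * (2 / (N / 2)) = 36 * M := by
      field_simp
      ring
    rw [abs_neg, abs_one]
    linarith
  · intro θ hθ
    have ht := (hasDerivAt_tan_half (hsub θ hθ)).continuousAt
    have hx' := (hx θ (hsub θ hθ)).continuousAt
    have h0 := (hH₀ (Real.tan (θ / 2) / N)).continuousAt.comp_of_eq hx' rfl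
    have h1 := (hH₁ (Real.tan (θ / 2) / N)).continuousAt.comp_of_eq hx' rfl
    have h3 := hH₃.continuousAt.comp_of_eq hx' rfl
    exact (((Real.continuous_sin.continuousAt.mul h0).sub (h1.div_const N)).add
      ((((ht.pow 2).const_add 1).pow 2 |>.div_const (4 * N ^ 3)).mul h3)).continuousWithinAt
  · intro θ _
    rw [abs_mul]
    have h1 : |1 + Real.cos θ| ≤ 2 := by
      rw [abs_le]
      constructor <;> linarith [Real.cos_le_one θ, Real.neg_one_le_cos θ]
    calc _ ≤ 2 * M := mul_le_mul h1 (hM₀ _) (abs_nonneg _) zero_le_two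
      _ ≤ 9 * M * N := by nlinarith
  · intro θ hθ
    set t := Real.tan (θ / 2)
    have ht : 0 ≤ t := by
      have := lt_tan_half_of_two_arctan_lt hθ.1 hθ.2
      have : N / 2 < t := this
      linarith
    have e0 : |Real.sin θ * H₀ (t / N)| ≤ M := by
      rw [abs_mul]
      simpa using mul_le_mul (Real.abs_sin_le_one θ) (hM₀ _) (abs_nonneg _) zero_le_one
    have e1 : |H₁ (t / N) / N| ≤ M := by
      rw [abs_div, abs_of_pos hN0]
      exact (div_le_self (abs_nonneg _) hN).trans (hM₁ _)
    have e3 : |(1 + t ^ 2) ^ 2 / (4 * N ^ 3) * H₃ (t / N)| ≤ 7 * N * M := by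
      by_cases hc : 2 < t / N
      · rw [hr₃ _ hc]
        simp only [mul_zero, abs_zero]
        positivity
      · rw [not_lt, div_le_iff₀ hN0] at hc
        have h5 : 1 + t ^ 2 ≤ 5 * N ^ 2 := by nlinarith
        have h25 : (1 + t ^ 2) ^ 2 ≤ (5 * N ^ 2) ^ 2 := by gcongr
        have h7 : (1 + t ^ 2) ^ 2 / (4 * N ^ 3) ≤ 7 * N := by
          rw [div_le_iff₀ (by positivity)]
          nlinarith [pow_pos hN0 4]
        rw [abs_mul, abs_of_nonneg (by positivity)]
        exact mul_le_mul h7 (hM₃ _) (abs_nonneg _) (by positivity)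
    calc _ ≤ |Real.sin θ * H₀ (t / N) - H₁ (t / N) / N| + _ := abs_add_le _ _
      _ ≤ (M + M) + 7 * N * M := add_le_add ((abs_sub _ _).trans (add_le_add e0 e1)) e3
      _ ≤ 9 * M * N := by nlinarith [mul_nonneg hM (sub_nonneg.2 hN)]

theorem exists_abs_le_of_eventually_const {f : ℝ → ℝ} {a b c d : ℝ} (hf : Continuous f)
    (hl : ∀ t < a, f t = c) (hr : ∀ t > b, f t = d) : ∃ M, ∀ t, |f t| ≤ M := by
  obtain ⟨C, hC⟩ := isCompact_Icc.exists_bound_of_continuousOn (s := Icc a b) hf.continuousOn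
  refine ⟨max C (max |c| |d|), fun t => ?_⟩
  rcases lt_or_ge t a with h | h
  · simp [hl t h]
  rcases lt_or_ge b t with h' | h'
  · simp [hr t h']
  · exact (hC t ⟨h, h'⟩).trans (le_max_left _ _)

theorem deriv_eq_zero_of_const_on_isOpen {f : ℝ → ℝ} {s : Set ℝ} {c : ℝ} (hs : IsOpen s)
    (hf : ∀ t ∈ s, f t = c) : ∀ t ∈ s, deriv f t = 0 := by
  intro t ht
  have : f =ᶠ[𝓝 t] fun _ => c := by
    filter_upwards [hs.mem_nhds ht] with x hx using hf x hx
  rw [this.deriv_eq]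
  simp

/-- Fourier coefficients on `[0, 2π]` of a function supported in `[a, π]`. -/
theorem integral_eq_of_eq_zero_off {f : ℝ → ℝ} {k : ℤ} {F : ℝ → ℝ} {a : ℝ} (ha : a ∈ Ioo 0 π)
    (hl : ∀ θ ∈ Ioo 0 a, f θ = 0) (hr : ∀ θ ∈ Ioo π (2 * π), f θ = 0)
    (hF : ∀ θ ∈ Ioo a π, f θ = F θ) :
    ∫ θ in (0 : ℝ)..(2 * π), Complex.exp (-Complex.I * k * θ) * (f θ : ℂ) =
      ∫ θ in a..π, Complex.exp (-Complex.I * k * θ) * (F θ : ℂ) := by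
  rw [intervalIntegral.integral_of_le (by linarith [Real.pi_pos]),
    intervalIntegral.integral_of_le ha.2.le]
  symm
  rw [← integral_indicator measurableSet_Ioc, ← integral_indicator measurableSet_Ioc]
  have hne : ∀ x : ℝ, ∀ᵐ θ : ℝ, θ ≠ x := fun x => by simp [ae_iff]
  refine integral_congr_ae ?_
  filter_upwards [hne a, hne π, hne (2 * π)] with θ h1 h2 h3
  have hpi := Real.pi_pos
  by_cases hθ : θ ∈ Ioo a π
  · rw [indicator_of_mem (Ioo_subset_Ioc_self hθ),
      indicator_of_mem (show θ ∈ Ioc 0 (2 * π) from ⟨ha.1.trans hθ.1, by linarith [hθ.2]⟩),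
      hF θ hθ]
  · rw [indicator_of_notMem (fun h => hθ ⟨h.1, lt_of_le_of_ne h.2 h2⟩)]
    by_cases hθ' : θ ∈ Ioc 0 (2 * π)
    · rw [indicator_of_mem hθ']
      have : f θ = 0 := by
        rcases lt_or_gt_of_ne h1 with h | h
        · exact hl θ ⟨hθ'.1, h⟩
        · refine hr θ ⟨lt_of_le_of_ne ?_ h2.symm, lt_of_le_of_ne hθ'.2 h3⟩
          by_contra hc
          exact hθ ⟨h, not_le.1 hc⟩
      simp [this]
    · rw [indicator_of_notMem hθ']

/-- The cut-off translation fields `g_n(θ) = (1+cos θ)·h(tan(θ/2)/n)` converge to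
`g(θ) = 1+cos θ` in `H^s` for `2 < s < 5/2` (convergence of the squared `H^s` norm
of the difference, expressed via Fourier coefficients, to `0`). -/
theorem stmt_8 (h : ℝ → ℝ) (hsm : ContDiff ℝ (⊤ : ℕ∞) h)
    (h1 : ∀ t : ℝ, t ≤ 1 → h t = 1) (h2 : ∀ t : ℝ, 2 ≤ t → h t = 0)
    (g : ℝ → ℝ) (hg : ∀ θ : ℝ, g θ = 1 + Real.cos θ)
    (gn : ℕ → ℝ → ℝ)
    (hgn_per : ∀ n : ℕ, 1 ≤ n → ∀ θ : ℝ, gn n (θ + 2 * π) = gn n θ)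
    (hgn_eq : ∀ n : ℕ, 1 ≤ n → ∀ θ ∈ Set.Ioo (-π) π,
      gn n θ = (1 + Real.cos θ) * h (Real.tan (θ / 2) / n))
    (hgn_pi : ∀ n : ℕ, 1 ≤ n → gn n π = 0) :
    ∀ s : ℝ, 2 < s → s < 5 / 2 →
      Filter.Tendsto
        (fun n : ℕ => ∑' k : ℤ,
          ENNReal.ofReal ((1 + (k : ℝ) ^ 2) ^ s *
            ‖((1 / (2 * π) : ℝ) *
              ∫ θ in (0 : ℝ)..(2 * π),
                Complex.exp (-Complex.I * k * θ) * Complex.ofReal (gn n θ - g θ) : ℂ)‖ ^ 2))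
        Filter.atTop (nhds 0) := by
  intro s _ hs
  have hsm₁ := (contDiff_infty_iff_deriv.1 hsm).2
  have hsm₂ := (contDiff_infty_iff_deriv.1 hsm₁).2
  have hsm₃ := (contDiff_infty_iff_deriv.1 hsm₂).2
  have hl₀ : ∀ t < 1, h t = 1 := fun t ht => h1 t ht.le
  have hr₀ : ∀ t > 2, h t = 0 := fun t ht => h2 t ht.le
  have hl₁ : ∀ t < 1, deriv h t = 0 := deriv_eq_zero_of_const_on_isOpen isOpen_Iio hl₀
  have hr₁ : ∀ t > 2, deriv h t = 0 := deriv_eq_zero_of_const_on_isOpen isOpen_Ioi hr₀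
  have hl₂ : ∀ t < 1, deriv (deriv h) t = 0 := deriv_eq_zero_of_const_on_isOpen isOpen_Iio hl₁
  have hr₂ : ∀ t > 2, deriv (deriv h) t = 0 := deriv_eq_zero_of_const_on_isOpen isOpen_Ioi hr₁
  have hl₃ : ∀ t < 1, deriv (deriv (deriv h)) t = 0 :=
    deriv_eq_zero_of_const_on_isOpen isOpen_Iio hl₂
  have hr₃ : ∀ t > 2, deriv (deriv (deriv h)) t = 0 :=
    deriv_eq_zero_of_const_on_isOpen isOpen_Ioi hr₂
  obtain ⟨M₀, hM₀⟩ := exists_abs_le_of_eventually_const (f := fun t => h t - 1) (a := 1) (b := 2)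
    (c := 0) (d := -1) (hsm.continuous.sub continuous_const) (fun t ht => by simp [hl₀ t ht])
    (fun t ht => by simp [hr₀ t ht])
  obtain ⟨M₁, hM₁⟩ := exists_abs_le_of_eventually_const hsm₁.continuous hl₁ hr₁
  obtain ⟨M₃, hM₃⟩ := exists_abs_le_of_eventually_const hsm₃.continuous hl₃ hr₃
  set M := max M₀ (max M₁ M₃)
  have hM : 0 ≤ M := (abs_nonneg _).trans ((hM₀ 0).trans (le_max_left _ _))
  have hpi := Real.pi_pos
  -- Reduction to the interval on which the difference is supported.
  have hred : ∀ n : ℕ, 1 ≤ n → ∀ k : ℤ,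
      ∫ θ in (0 : ℝ)..(2 * π), Complex.exp (-Complex.I * k * θ) * Complex.ofReal (gn n θ - g θ) =
      ∫ θ in (2 * Real.arctan ((n : ℝ) / 2))..π, Complex.exp (-Complex.I * k * θ) *
        (((1 + Real.cos θ) * (h (Real.tan (θ / 2) / n) - 1) : ℝ) : ℂ) := by
    intro n hn k
    have hn0 : (0 : ℝ) < n := by exact_mod_cast hn
    have ha : 2 * Real.arctan ((n : ℝ) / 2) ∈ Ioo 0 π :=
      ⟨by linarith [Real.arctan_pos.2 (half_pos hn0)],
        by linarith [Real.arctan_lt_pi_div_two ((n : ℝ) / 2)]⟩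
    have hin : ∀ θ ∈ Ioo (-π) π,
        gn n θ - g θ = (1 + Real.cos θ) * (h (Real.tan (θ / 2) / n) - 1) := by
      intro θ hθ
      rw [hgn_eq n hn θ hθ, hg]
      ring
    have hzero : ∀ θ ∈ Ioo (-π) (2 * Real.arctan ((n : ℝ) / 2)), gn n θ - g θ = 0 := by
      intro θ hθ
      rw [hin θ ⟨hθ.1, hθ.2.trans ha.2⟩, h1, sub_self, mul_zero]
      rw [div_le_one hn0]
      linarith [tan_half_lt_of_lt_two_arctan hθ.1 hθ.2]
    refine integral_eq_of_eq_zero_off ha (fun θ hθ => hzero θ ⟨by linarith [hθ.1], hθ.2⟩) ?_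
      (fun θ hθ => hin θ ⟨by linarith [hθ.1, ha.1], hθ.2⟩)
    intro θ hθ
    have := hzero (θ - 2 * π) ⟨by linarith [hθ.1], by linarith [hθ.2, ha.1]⟩
    rw [← hgn_per n hn (θ - 2 * π), sub_add_cancel, hg, Real.cos_sub_two_pi] at this
    rw [hg, this]
  have hsmall : ∀ n : ℕ, 1 ≤ n → ∀ k : ℤ,
      ‖∫ θ in (0 : ℝ)..(2 * π), Complex.exp (-Complex.I * k * θ) *
        Complex.ofReal (gn n θ - g θ)‖ ≤ 8 * M / n := by
    intro n hn k
    have hn0 : (0 : ℝ) < n := by exact_mod_cast hn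
    rw [hred n hn k]
    refine (norm_integral_exp_mul_le (B := 2 * M)
      (by linarith [Real.arctan_lt_pi_div_two ((n : ℝ) / 2)]) ?_).trans ?_
    · intro θ _
      rw [abs_mul]
      have hc : |1 + Real.cos θ| ≤ 2 := by
        rw [abs_le]
        constructor <;> linarith [Real.cos_le_one θ, Real.neg_one_le_cos θ]
      exact mul_le_mul hc ((hM₀ _).trans (le_max_left _ _)) (abs_nonneg _) zero_le_two
    · calc 2 * M * (π - 2 * Real.arctan ((n : ℝ) / 2)) ≤ 2 * M * (2 / ((n : ℝ) / 2)) := by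
            gcongr
            exact pi_sub_two_arctan_le (half_pos hn0)
        _ = 8 * M / n := by
            field_simp
            ring
  have hcubic : ∀ n : ℕ, 1 ≤ n → ∀ k : ℤ,
      |(k : ℝ)| ^ 3 * ‖∫ θ in (0 : ℝ)..(2 * π), Complex.exp (-Complex.I * k * θ) *
        Complex.ofReal (gn n θ - g θ)‖ ≤ 1 + 36 * M := by
    intro n hn k
    rcases eq_or_ne k 0 with rfl | hk
    · simp
      positivity
    rw [hred n hn k]
    refine cubic_decay_of_cutoff (H₀ := fun t => h t - 1) hk (by exact_mod_cast hn)
      (fun t => ((hsm.differentiable (by simp)) t).hasDerivAt.sub_const 1)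
      (fun t => ((hsm₁.differentiable (by simp)) t).hasDerivAt)
      (fun t => ((hsm₂.differentiable (by simp)) t).hasDerivAt) hsm₃.continuous
      (fun t => (hM₀ t).trans (le_max_left _ _))
      (fun t => (hM₁ t).trans ((le_max_left _ _).trans (le_max_right _ _)))
      (fun t => (hM₃ t).trans ((le_max_right _ _).trans (le_max_right _ _)))
      (fun t ht => by simp [hl₀ t ht]) hl₁ hl₂ (fun t ht => by simp [hr₀ t ht]) hr₁ hr₂ hr₃
  have hfac : ∀ w : ℂ, ‖((1 / (2 * π) : ℝ) : ℂ) * w‖ ≤ ‖w‖ := by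
    intro w
    rw [norm_mul, Complex.norm_real, Real.norm_of_nonneg (by positivity)]
    refine mul_le_of_le_one_left (norm_nonneg _) ?_
    rw [div_le_one (by positivity)]
    linarith [Real.pi_gt_three]
  refine tendsto_tsum_sobolev_of_cubic_decay (K := 1 + 36 * M) hs ?_ ?_ ?_
  · intro k
    refine squeeze_zero_norm' ?_ (tendsto_const_div_atTop_nhds_zero_nat (8 * M))
    filter_upwards [eventually_ge_atTop 1] with n hn
    exact (hfac _).trans (hsmall n hn k)
  · filter_upwards [eventually_ge_atTop 1] with n hn k
    have hn1 : (1 : ℝ) ≤ n := by exact_mod_cast hn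
    have := div_le_self (by positivity : 0 ≤ 8 * M) hn1
    linarith [(hfac _).trans (hsmall n hn k)]
  · filter_upwards [eventually_ge_atTop 1] with n hn k
    exact (mul_le_mul_of_nonneg_left (hfac _) (by positivity)).trans (hcubic n hn k)
end
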